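/- For every partition λ of r, M^λ / SGR^λ(1,…,1) ≅ S^λ as 𝔖_r-modules; equivalently, SGR^λ(1,…,1) = G^λ as subspaces of M^λ. (Here SGR^λ(1,…,1) is the span of the relations h^T_c = λ'_{c+1}·T̄ − Σ S̄, the sum over all tableaux S obtained from T by exchanging one entry of column c+1 with one entry of column c, for all tableaux T and all c = 1,…,λ_1−1.) -/

import Mathlib

set_option synthInstance.maxHeartbeats 1000000
set_option maxSynthPendingDepth 3
set_option maxHeartbeats 1000000

noncomputable section

namespace Specht

variable (K : Type) [Field K] [CharZero K]
variable {L : ℕ} (μ : Fin L → ℕ) (r : ℕ)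

/-- The cells of the Young diagram of `λ`, where `μ = λ'` records the column lengths:
`⟨c, j⟩` is the cell in column `c` and row `j` (`0`-indexed). -/
abbrev Cell : Type := Σ c : Fin L, Fin (μ c)

/-- Young tableaux of shape `λ`: bijective fillings of the diagram of `λ` by `{1, …, r}`. -/
abbrev Tab : Type := Cell μ ≃ Fin r

/-- The free vector space on the set of Young tableaux of shape `λ`. -/
abbrev FreeTab : Type := Tab μ r →₀ K

/-- The relations `T + S = 0`, for `S` obtained from `T` by a transposition of two entries
in the same column. -/
def colRel : Submodule K (FreeTab K μ r) :=
  Submodule.span K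
    {x | ∃ (T : Tab μ r) (c : Fin L) (j₁ j₂ : Fin (μ c)), j₁ ≠ j₂ ∧
      x = Finsupp.single T 1 +
        Finsupp.single ((Equiv.swap (⟨c, j₁⟩ : Cell μ) ⟨c, j₂⟩).trans T) 1}

/-- The module `M^λ` spanned by column tabloids. -/
abbrev MLam : Type := FreeTab K μ r ⧸ colRel K μ r

/-- The column tabloid of a tableau. -/
def tabloid (T : Tab μ r) : MLam K μ r :=
  Submodule.Quotient.mk (Finsupp.single T 1)

/-- `ρ` is the action of the symmetric group `𝔖_r` on `M^λ` by relabelling entries. -/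
def IsTabAction (ρ : Equiv.Perm (Fin r) → (MLam K μ r →ₗ[K] MLam K μ r)) : Prop :=
  ∀ (σ : Equiv.Perm (Fin r)) (T : Tab μ r), ρ σ (tabloid K μ r T) = tabloid K μ r (T.trans σ)

/-- The permutation of the cells exchanging the top `k` cells of column `c+1` with
the `k` cells of column `c` recorded by `A`, in increasing row order. -/
def exchPerm (c : ℕ) (hc : c + 1 < L) (k : ℕ) (hk : k ≤ μ ⟨c+1, hc⟩)
    (A : Finset (Fin (μ ⟨c, by omega⟩))) (hA : A.card = k) : Equiv.Perm (Cell μ) :=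
  (List.ofFn (fun i : Fin k =>
    Equiv.swap (⟨⟨c, by omega⟩, ((A.orderIsoOfFin hA i : A) : Fin (μ ⟨c, by omega⟩))⟩ : Cell μ)
      ⟨⟨c+1, hc⟩, ⟨i.val, by omega⟩⟩)).prod

/-- The Garnir element `g^T_{c,k} = T̄ - Σ S̄ ∈ M^λ`, the sum being over all tableaux `S`
obtained from `T` by exchanging the top `k` entries of column `c+1` with `k` entries of
column `c`, maintaining the vertical order of each exchanged set. -/
def garnirElt (T : Tab μ r) (c : ℕ) (hc : c + 1 < L) (k : ℕ) (hk : k ≤ μ ⟨c+1, hc⟩) :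
    MLam K μ r :=
  tabloid K μ r T -
    ∑ A ∈ (Finset.powersetCard k (Finset.univ : Finset (Fin (μ ⟨c, by omega⟩)))).attach,
      tabloid K μ r
        ((exchPerm μ c hc k hk A.1 (Finset.mem_powersetCard.mp A.2).2).trans T)

/-- The permutation of the cells exchanging the `k` cells of column `c+1` recorded by `B`
with the `k` cells of column `c` recorded by `A`, in increasing row order. -/
def exch2Perm (c : ℕ) (hc : c + 1 < L)  (k : ℕ)
    (A : Finset (Fin (μ ⟨c, by omega⟩))) (hA : A.card = k)
    (B : Finset (Fin (μ ⟨c+1, hc⟩))) (hB : B.card = k) : Equiv.Perm (Cell μ) :=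
  (List.ofFn (fun i : Fin k =>
    Equiv.swap (⟨⟨c, by omega⟩, ((A.orderIsoOfFin hA i : A) : Fin (μ ⟨c, by omega⟩))⟩ : Cell μ)
      ⟨⟨c+1, hc⟩, ((B.orderIsoOfFin hB i : B) : Fin (μ ⟨c+1, hc⟩))⟩)).prod

/-- The symmetrized Garnir element `r^T_{c,k} = C(μ_{c+1},k)·T̄ - Σ S̄ ∈ M^λ`, the sum being
over all tableaux `S` obtained from `T` by exchanging any `k` entries of column `c+1` with
any `k` entries of column `c`, maintaining the vertical order of each exchanged set. -/
def sgrElt (T : Tab μ r) (c : ℕ) (hc : c + 1 < L) (k : ℕ) : MLam K μ r :=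
  ((μ ⟨c+1, hc⟩).choose k : K) • tabloid K μ r T -
    ∑ A ∈ (Finset.powersetCard k (Finset.univ : Finset (Fin (μ ⟨c, by omega⟩)))).attach,
      ∑ B ∈ (Finset.powersetCard k (Finset.univ : Finset (Fin (μ ⟨c+1, hc⟩)))).attach,
        tabloid K μ r
          ((exch2Perm μ c hc k A.1 (Finset.mem_powersetCard.mp A.2).2
              B.1 (Finset.mem_powersetCard.mp B.2).2).trans T)

/-- The subspace `G^λ ⊆ M^λ` spanned by all Garnir relations. -/
def garnirSub : Submodule K (MLam K μ r) :=
  Submodule.span K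
    {x | ∃ (T : Tab μ r) (c : ℕ) (hc : c + 1 < L) (k : ℕ) (hk : k ≤ μ ⟨c+1, hc⟩),
      x = garnirElt K μ r T c hc k hk}

/-- The subspace `GR^λ(k_1, …, k_{λ_1 - 1}) ⊆ M^λ` spanned by the Garnir relations
`g^T_{c,k_c}`. -/
def grSub (kk : ℕ → ℕ) : Submodule K (MLam K μ r) :=
  Submodule.span K
    {x | ∃ (T : Tab μ r) (c : ℕ) (hc : c + 1 < L) (hk : kk c ≤ μ ⟨c+1, hc⟩),
      x = garnirElt K μ r T c hc (kk c) hk}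

/-- The subspace `SGR^λ(k_1, …, k_{λ_1 - 1}) ⊆ M^λ` spanned by the symmetrized Garnir
relations `r^T_{c,k_c}`. -/
def sgrSub (kk : ℕ → ℕ) : Submodule K (MLam K μ r) :=
  Submodule.span K
    {x | ∃ (T : Tab μ r) (c : ℕ) (hc : c + 1 < L), x = sgrElt K μ r T c hc (kk c)}

/-- Quotients `M₁ ⧸ N₁` and `M₂ ⧸ N₂` are isomorphic compatibly with the given actions. -/
def IsQuotIso {G' : Type} {M₁ M₂ : Type} [AddCommGroup M₁] [Module K M₁]
    [AddCommGroup M₂] [Module K M₂]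
    (N₁ : Submodule K M₁) (N₂ : Submodule K M₂)
    (ρ₁ : G' → M₁ →ₗ[K] M₁) (ρ₂ : G' → M₂ →ₗ[K] M₂) : Prop :=
  ∃ e : (M₁ ⧸ N₁) ≃ₗ[K] (M₂ ⧸ N₂),
    ∀ (g : G') (x : M₁) (y : M₂),
      e (Submodule.Quotient.mk x) = Submodule.Quotient.mk y →
      e (Submodule.Quotient.mk (ρ₁ g x)) = Submodule.Quotient.mk (ρ₂ g y)

end Specht

/-!
Up to sign, a tabloid depends only on which column each entry lies in. Fix two adjacent columns,
the left one of length `n`, and let `U` be the set of their entries, so that `#U ≤ 2 * n`. Twisting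
tabloids by the sign of the tableau turns those that agree with `T` outside the two columns into the
values `F A` of a function of the `n`-subset `A ⊆ U` filling the left column.

Put `S X = ∑ F B`, over the `n`-subsets `B` of `X`. The Garnir relation exchanging a single entry
`j` of the right column is `S (A ∪ {j})`, so the symmetrized relation of a tableau with left column
`A` is `∑ j ∈ U \ A, S (A ∪ {j})`. Summing it over the `n`-subsets `A` of a larger `X ⊆ U`
gives, as in the commutation of the up and down operators of the Boolean lattice,
`(#X - n) * (n + 1 - #(U \ X)) • S X` plus a multiple of `∑ j ∈ U \ X, S (X ∪ {j})`. The
coefficient is nonzero because `#U ≤ 2 * n < n + #X`, so downward induction on `X` expresses every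
`S X` with `#X > n` through symmetrized relations. All Garnir relations follow, since the sum of `F`
over the `n`-subsets of `A ∪ J` containing `J` is, by inclusion–exclusion, a combination of the
sums `S X`.

Conversely, exchanging an arbitrary set of `k` entries of the right column is, after reordering that
column, exchanging its top `k` entries, so a symmetrized relation is a sum of Garnir relations.
-/

namespace Specht

open Finset Equiv

section PowersetCardSum

variable {α V : Type*}

/-- The `n`-th down operator of the Boolean lattice: the sum of `F` over the `n`-subsets of `X`. -/
def powersetCardSum [AddCommMonoid V] (F : Finset α → V) (n : ℕ) (X : Finset α) : V :=
  ∑ B ∈ X.powersetCard n, F B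

section AddCommMonoid

variable [AddCommMonoid V] (F : Finset α → V) (n : ℕ)

lemma sum_powersetCard_succ_powersetCardSum (X : Finset α) :
    ∑ E ∈ X.powersetCard (n + 1), powersetCardSum F n E = (#X - n) • powersetCardSum F n X := by
  classical
  simp only [powersetCardSum, smul_sum]
  rw [sum_comm' (t' := X.powersetCard n) (s' := fun B => {E ∈ X.powersetCard (n + 1) | B ⊆ E})
    (by grind)]
  refine sum_congr rfl fun B hB => ?_
  obtain ⟨hBX, hcard⟩ := mem_powersetCard.1 hB
  rw [sum_const, card_filter_powersetCard_subset _ _ _ hBX (by omega), hcard]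
  simp

variable [DecidableEq α]

lemma sum_powersetCard_succ_insert {j : α} {X : Finset α} (hj : j ∉ X) :
    ∑ E ∈ (insert j X).powersetCard (n + 1), F E =
      ∑ E ∈ X.powersetCard (n + 1), F E + ∑ A ∈ X.powersetCard n, F (insert j A) := by
  rw [powersetCard_succ_insert hj, sum_union, sum_image]
  · exact insert_erase_invOn.2.injOn.mono fun A hA => notMem_mono (mem_powersetCard.1 hA).1 hj
  · grind [Finset.disjoint_left]

lemma sum_powersetCard_sum_sdiff_insert (X : Finset α) :
    ∑ A ∈ X.powersetCard n, ∑ j ∈ X \ A, F (insert j A) =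
      (n + 1) • ∑ E ∈ X.powersetCard (n + 1), F E := by
  have hconst : ∀ E ∈ X.powersetCard (n + 1), (n + 1) • F E = ∑ _j ∈ E, F E := fun E hE => by
    rw [sum_const, (mem_powersetCard.1 hE).2]
  rw [smul_sum, sum_congr rfl hconst, sum_sigma', sum_sigma']
  refine sum_bij' (fun p _ => ⟨insert p.2 p.1, p.2⟩) (fun p _ => ⟨p.1.erase p.2, p.2⟩)
    (by grind) (by grind) ?_ ?_ fun _ _ => rfl
  · rintro ⟨A, j⟩ hA
    rw [mem_sigma, mem_sdiff] at hA
    simp [erase_insert hA.2.2]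
  · rintro ⟨E, j⟩ hE
    simp [insert_erase (mem_sigma.1 hE).2]

lemma sum_powersetCardSum_insert_add {j : α} {X : Finset α} (hj : j ∉ X) (hn : n ≤ #X) :
    ∑ A ∈ X.powersetCard n, powersetCardSum F n (insert j A) + (#X - n) • powersetCardSum F n X =
      (#X - n + 1) • powersetCardSum F n (insert j X) := by
  rw [← sum_powersetCard_succ_powersetCardSum, add_comm, ← sum_powersetCard_succ_insert _ _ hj,
    sum_powersetCard_succ_powersetCardSum, card_insert_of_notMem hj, Nat.sub_add_comm hn]

theorem sum_powersetCard_sum_powersetCardSum_insert {X U : Finset α} (hXU : X ⊆ U) (hn : n ≤ #X) :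
    ∑ A ∈ X.powersetCard n, ∑ j ∈ U \ A, powersetCardSum F n (insert j A) +
        ((#X - n) * #(U \ X)) • powersetCardSum F n X =
      ((#X - n) * (n + 1)) • powersetCardSum F n X +
        (#X - n + 1) • ∑ j ∈ U \ X, powersetCardSum F n (insert j X) := by
  have hsplit : ∀ A ∈ X.powersetCard n, ∑ j ∈ U \ A, powersetCardSum F n (insert j A) =
      ∑ j ∈ X \ A, powersetCardSum F n (insert j A) +
        ∑ j ∈ U \ X, powersetCardSum F n (insert j A) := by
    intro A hA
    rw [← sum_union (by grind [Finset.disjoint_left])]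
    exact sum_congr (by grind) fun _ _ => rfl
  have hinside : ∑ A ∈ X.powersetCard n, ∑ j ∈ X \ A, powersetCardSum F n (insert j A) =
      ((#X - n) * (n + 1)) • powersetCardSum F n X := by
    rw [sum_powersetCard_sum_sdiff_insert, sum_powersetCard_succ_powersetCardSum, smul_smul,
      mul_comm]
  have houtside : ∑ A ∈ X.powersetCard n, ∑ j ∈ U \ X, powersetCardSum F n (insert j A) +
      ((#X - n) * #(U \ X)) • powersetCardSum F n X =
        (#X - n + 1) • ∑ j ∈ U \ X, powersetCardSum F n (insert j X) := by
    rw [sum_comm, mul_comm, mul_smul, ← sum_const, ← sum_add_distrib, smul_sum]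
    exact sum_congr rfl fun j hj => sum_powersetCardSum_insert_add F n (mem_sdiff.1 hj).2 hn
  rw [sum_congr rfl hsplit, sum_add_distrib, hinside, add_assoc, houtside]

lemma sum_superset_eq {A J : Finset α} (hAJ : Disjoint A J) (hA : #A = n) :
    ∑ B ∈ (A ∪ J).powersetCard n with J ⊆ B, F B = ∑ I ∈ A.powersetCard #J, F (A \ I ∪ J) := by
  symm
  refine sum_bij' (fun I _ => A \ I ∪ J) (fun B _ => A \ B) ?_ ?_ ?_ ?_ ?_
  · intro I hI
    obtain ⟨hIA, hI⟩ := mem_powersetCard.1 hI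
    have hdisj : Disjoint (A \ I) J := disjoint_of_subset_left sdiff_subset hAJ
    rw [mem_filter, mem_powersetCard, card_union_of_disjoint hdisj, ← hI,
      card_sdiff_add_card_eq_card hIA]
    exact ⟨⟨union_subset_union_left sdiff_subset, hA⟩, subset_union_right⟩
  · intro B hB
    rw [mem_filter, mem_powersetCard] at hB
    obtain ⟨⟨hBA, rfl⟩, hJB⟩ := hB
    have := card_sdiff_add_card_inter A B
    have := card_sdiff_add_card_eq_card hJB
    have : B \ J = A ∩ B := by grind [Finset.disjoint_left]
    grind
  · grind [Finset.disjoint_left]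
  · grind [Finset.disjoint_left]
  · simp

end AddCommMonoid

section AddCommGroup

variable [DecidableEq α] [AddCommGroup V]

/-- The Garnir relation for a function `F` of the set of entries of a column: `F A` minus the
signed sum of the values obtained by letting `J` take the place of `#J` elements of `A`. The sign
is `(-1) ^ #J` because `F` will be a tabloid twisted by the sign of its tableau. -/
def garnirSum (F : Finset α → V) (A J : Finset α) : V :=
  F A - (-1 : ℤˣ) ^ #J • ∑ I ∈ A.powersetCard #J, F (A \ I ∪ J)

lemma garnirSum_units_smul (u : ℤˣ) (F : Finset α → V) (A J : Finset α) :
    garnirSum (u • F) A J = u • garnirSum F A J := by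
  simp only [garnirSum, Pi.smul_apply, ← smul_sum, smul_sub, smul_comm u]

lemma sum_superset_insert (F : Finset α → V) (n : ℕ) {j : α} {X J : Finset α}
    (hjX : j ∉ X) (hjJ : j ∉ J) :
    ∑ B ∈ (X ∪ insert j J).powersetCard n with insert j J ⊆ B, F B =
      ∑ B ∈ (insert j X ∪ J).powersetCard n with J ⊆ B, F B -
        ∑ B ∈ (X ∪ J).powersetCard n with J ⊆ B, F B := by
  have hdisj : Disjoint {B ∈ (X ∪ insert j J).powersetCard n | insert j J ⊆ B}
      {B ∈ (X ∪ J).powersetCard n | J ⊆ B} := disjoint_left.2 fun B hB hB' => by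
    have hjB : j ∈ B := (mem_filter.1 hB).2 (mem_insert_self j J)
    exact absurd ((mem_powersetCard.1 (mem_filter.1 hB').1).1 hjB) (by simp [hjX, hjJ])
  rw [eq_sub_iff_add_eq, ← sum_union hdisj]
  refine sum_congr ?_ fun _ _ => rfl
  ext B
  by_cases j ∈ B <;> grind

lemma garnirSum_singleton (F : Finset α → V) {j : α} {A : Finset α} (hj : j ∉ A) :
    garnirSum F A {j} = powersetCardSum F #A (insert j A) := by
  have hsuperset : ∑ B ∈ (A ∪ {j}).powersetCard #A with {j} ⊆ B, F B =
      powersetCardSum F #A (insert j A) - F A := by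
    simpa [powersetCardSum] using sum_superset_insert F #A hj (notMem_empty j)
  rw [garnirSum, ← sum_superset_eq F #A (disjoint_singleton_right.2 hj) rfl, hsuperset]
  simp

lemma sum_superset_mem {F : Finset α → V} {n : ℕ} {U : Finset α} {N : AddSubgroup V}
    (hS : ∀ X ⊆ U, n < #X → powersetCardSum F n X ∈ N)
    {J X : Finset α} (hJU : J ⊆ U) (hXU : X ⊆ U) (hX : n < #X) (hXJ : Disjoint X J) :
    ∑ B ∈ (X ∪ J).powersetCard n with J ⊆ B, F B ∈ N := by
  induction J using Finset.induction_on generalizing X with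
  | empty => simpa [powersetCardSum] using hS X hXU hX
  | insert j J hjJ ih =>
    rw [disjoint_insert_right] at hXJ
    rw [sum_superset_insert F n hXJ.1 hjJ]
    refine N.sub_mem (ih ?_ ?_ ?_ ?_) (ih ?_ ?_ ?_ ?_) <;> grind [Finset.disjoint_left]

end AddCommGroup

section Module

variable {K : Type*} [DivisionRing K] [CharZero K] [DecidableEq α] [AddCommGroup V] [Module K V]
  {F : Finset α → V} {n : ℕ} {U : Finset α} {N : Submodule K V}

theorem powersetCardSum_mem (hU : #U ≤ 2 * n)
    (hN : ∀ A ∈ U.powersetCard n, ∑ j ∈ U \ A, powersetCardSum F n (insert j A) ∈ N)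
    {X : Finset α} (hXU : X ⊆ U) (hX : n < #X) : powersetCardSum F n X ∈ N := by
  induction hm : #(U \ X) using Nat.strong_induction_on generalizing X with
  | _ m ih =>
  have hup : ∑ j ∈ U \ X, powersetCardSum F n (insert j X) ∈ N := N.sum_mem fun j hj => by
    obtain ⟨hjU, hjX⟩ := mem_sdiff.1 hj
    have hcard : n < #(insert j X) := by
      rw [card_insert_of_notMem hjX]
      omega
    refine ih _ ?_ (insert_subset hjU hXU) hcard rfl
    rw [← hm, sdiff_insert]
    exact card_erase_lt_of_mem hj
  have hdown : ∑ A ∈ X.powersetCard n, ∑ j ∈ U \ A, powersetCardSum F n (insert j A) ∈ N :=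
    N.sum_mem fun A hA => hN A (powersetCard_mono hXU hA)
  have hcoeff : (#X - n) * (n + 1) = (#X - n) * (n + 1 - m) + (#X - n) * m := by
    have := card_sdiff_add_card_eq_card hXU
    rw [← mul_add, Nat.sub_add_cancel (by omega)]
  have hrel := sum_powersetCard_sum_powersetCardSum_insert F n hXU hX.le
  rw [hm, hcoeff, add_smul, add_right_comm, add_left_inj] at hrel
  rw [hrel, N.add_mem_iff_left (N.smul_of_tower_mem _ hup), ← Nat.cast_smul_eq_nsmul K,
    N.smul_mem_iff] at hdown
  · exact hdown
  · have := card_sdiff_add_card_eq_card hXU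
    exact Nat.cast_ne_zero.2 (mul_ne_zero (by omega) (by omega))

theorem garnirSum_mem (hU : #U ≤ 2 * n)
    (hN : ∀ A ∈ U.powersetCard n, ∑ j ∈ U \ A, garnirSum F A {j} ∈ N)
    {A J : Finset α} (hAU : A ⊆ U) (hJU : J ⊆ U) (hA : #A = n) (hAJ : Disjoint A J) :
    garnirSum F A J ∈ N := by
  have hinsert : ∀ B ∈ U.powersetCard n,
      ∑ j ∈ U \ B, powersetCardSum F n (insert j B) ∈ N := fun B hB => by
    convert hN B hB using 2 with j hj
    rw [garnirSum_singleton F (mem_sdiff.1 hj).2, (mem_powersetCard.1 hB).2]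
  have hlarge : ∀ X ⊆ U, n < #X → powersetCardSum F n X ∈ N :=
    fun X hXU hX => powersetCardSum_mem hU hinsert hXU hX
  rw [garnirSum, ← sum_superset_eq F n hAJ hA]
  induction J using Finset.induction_on with
  | empty => simp [← hA]
  | insert j J hjJ ih =>
    rw [disjoint_insert_right] at hAJ
    rw [insert_subset_iff] at hJU
    have hmem : ∑ B ∈ (insert j A ∪ J).powersetCard n with J ⊆ B, F B ∈ N :=
      sum_superset_mem (N := N.toAddSubgroup) hlarge hJU.2 (insert_subset hJU.1 hAU)
        (by grind) (by grind [Finset.disjoint_left])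
    rw [sum_superset_insert F n hAJ.1 hjJ, card_insert_of_notMem hjJ, pow_succ, mul_neg_one,
      Units.neg_smul, smul_sub, neg_sub, sub_sub_eq_add_sub, add_sub_right_comm]
    exact N.add_mem (ih hJU.2 hAJ.2) (zsmul_mem hmem _)

end Module

end PowersetCardSum

section Recolor

variable {α κ : Type*} [DecidableEq α] [DecidableEq κ]

/-- The word obtained from `w` by giving colour `c` to the letters of `A`, and colour `d` to the
remaining letters that had colour `c`. -/
def recolor (w : α → κ) (c d : κ) (A : Finset α) (x : α) : κ :=
  if x ∈ A then c else if w x = c then d else w x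

lemma recolor_eq_self {w : α → κ} {c : κ} {A : Finset α} (hA : ∀ x, x ∈ A ↔ w x = c) (d : κ) :
    recolor w c d A = w := by
  ext x
  grind [recolor]

lemma recolor_eq_left_iff {c d : κ} (hcd : c ≠ d) (w : α → κ) (A : Finset α) (x : α) :
    recolor w c d A x = c ↔ x ∈ A := by
  grind [recolor]

lemma recolor_eq_right_iff {c d : κ} (hcd : c ≠ d) (w : α → κ) (A : Finset α) (x : α) :
    recolor w c d A x = d ↔ (w x = c ∨ w x = d) ∧ x ∉ A := by
  grind [recolor]

lemma recolor_recolor {w : α → κ} {c d : κ} {A : Finset α} (hA : ∀ x ∈ A, w x = c ∨ w x = d)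
    (B : Finset α) : recolor (recolor w c d A) c d B = recolor w c d B := by
  ext x
  grind [recolor]

lemma recolor_comp_swap {w : α → κ} {c d : κ} {A : Finset α} {x y : α} (hxA : x ∈ A)
    (hyA : y ∉ A) (hx : w x = c ∨ w x = d) (hy : w y = c ∨ w y = d) :
    recolor w c d A ∘ swap x y = recolor w c d (insert y (A.erase x)) := by
  ext z
  rcases eq_or_ne z x with rfl | hzx
  · grind [recolor]
  rcases eq_or_ne z y with rfl | hzy <;> grind [recolor]

end Recolor

section MatchSwap

variable {α β κ : Type*} [DecidableEq α] [DecidableEq β] [DecidableEq κ] {k : ℕ}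

/-- The product of the transpositions exchanging `x i` and `y i`. -/
def matchSwap (x y : Fin k → α) : Perm α :=
  (List.ofFn fun i => swap (x i) (y i)).prod

lemma matchSwap_succ (x y : Fin (k + 1) → α) :
    matchSwap x y = swap (x 0) (y 0) * matchSwap (x ∘ Fin.succ) (y ∘ Fin.succ) := by
  rw [matchSwap, List.ofFn_succ, List.prod_cons]
  rfl

lemma matchSwap_trans (f : α ≃ β) (x y : Fin k → α) :
    (matchSwap x y).trans f = f.trans (matchSwap (f ∘ x) (f ∘ y)) := by
  have hconj : f.permCongrHom (matchSwap x y) = matchSwap (f ∘ x) (f ∘ y) := by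
    simp only [matchSwap, map_list_prod, List.map_ofFn]
    congr 2
    ext i : 1
    exact Equiv.symm_trans_swap_trans _ _ f
  rw [← hconj]
  ext z
  simp [Equiv.permCongr_apply]

lemma sign_matchSwap [Fintype α] {x y : Fin k → α} (hxy : ∀ i, x i ≠ y i) :
    Perm.sign (matchSwap x y) = (-1) ^ k := by
  simp [matchSwap, map_list_prod, List.map_ofFn, Function.comp_def, Perm.sign_swap (hxy _)]

lemma recolor_comp_matchSwap_inv {w : α → κ} {c d : κ} {A : Finset α} {x y : Fin k → α}
    (hx : x.Injective) (hy : y.Injective) (hxA : ∀ i, x i ∈ A) (hyA : ∀ i, y i ∉ A)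
    (hxw : ∀ i, w (x i) = c ∨ w (x i) = d) (hyw : ∀ i, w (y i) = c ∨ w (y i) = d) :
    recolor w c d A ∘ ⇑(matchSwap x y)⁻¹ =
      recolor w c d (A \ univ.image x ∪ univ.image y) := by
  induction k with
  | zero => simp [matchSwap]
  | succ k ih =>
    have hx0 : x 0 ∉ univ.image (x ∘ Fin.succ) := by simp [hx.eq_iff]
    have hy0 : y 0 ∉ univ.image (y ∘ Fin.succ) := by simp [hy.eq_iff]
    have himage (z : Fin (k + 1) → α) :
        univ.image z = insert (z 0) (univ.image (z ∘ Fin.succ)) := by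
      rw [Fin.univ_succ, cons_eq_insert, image_insert, map_eq_image, image_image]
      rfl
    rw [matchSwap_succ, mul_inv_rev, swap_inv, Perm.coe_mul, ← Function.comp_assoc,
      ih (hx.comp (Fin.succ_injective _)) (hy.comp (Fin.succ_injective _)) (fun i => hxA _)
        (fun i => hyA _) (fun i => hxw _) (fun i => hyw _),
      recolor_comp_swap (by grind) (by grind) (hxw 0) (hyw 0), himage x, himage y]
    congr 1
    grind

end MatchSwap

section Columns

variable {L : ℕ} {μ : Fin L → ℕ} {r : ℕ}

/-- The column of `T` containing the entry `x`. -/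
def columnOf (T : Tab μ r) (x : Fin r) : Fin L :=
  (T.symm x).1

/-- The set of entries of column `c` of `T`. -/
def columnEntries (T : Tab μ r) (c : Fin L) : Finset (Fin r) :=
  {x | columnOf T x = c}

/-- Column `c` of `T`, as the function sending a row index to the entry in that row. -/
def columnEmbedding (T : Tab μ r) (c : Fin L) : Fin (μ c) ↪ Fin r :=
  (Function.Embedding.sigmaMk c).trans T.toEmbedding

lemma mem_columnEntries {T : Tab μ r} {c : Fin L} {x : Fin r} :
    x ∈ columnEntries T c ↔ columnOf T x = c := by
  simp [columnEntries]

lemma columnOf_columnEmbedding (T : Tab μ r) (c : Fin L) (j : Fin (μ c)) :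
    columnOf T (columnEmbedding T c j) = c := by
  simp [columnOf, columnEmbedding]

lemma columnOf_trans (T : Tab μ r) (q : Perm (Fin r)) :
    columnOf (T.trans q) = columnOf T ∘ ⇑q⁻¹ :=
  rfl

lemma map_columnEmbedding_univ (T : Tab μ r) (c : Fin L) :
    univ.map (columnEmbedding T c) = columnEntries T c := by
  ext x
  obtain ⟨⟨d, j⟩, rfl⟩ := T.surjective x
  simp only [mem_map, mem_univ, true_and, mem_columnEntries, columnOf, T.symm_apply_apply]
  refine ⟨fun ⟨i, hi⟩ => ?_, ?_⟩
  · exact congrArg Sigma.fst (T.injective hi).symm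
  · rintro rfl
    exact ⟨j, rfl⟩

lemma card_columnEntries (T : Tab μ r) (c : Fin L) : #(columnEntries T c) = μ c := by
  rw [← map_columnEmbedding_univ, card_map, card_univ, Fintype.card_fin]

lemma disjoint_columnEntries (T : Tab μ r) {c d : Fin L} (h : c ≠ d) :
    Disjoint (columnEntries T c) (columnEntries T d) := by
  simp only [disjoint_left, mem_columnEntries]
  exact fun x hc hd => h (hc.symm.trans hd)

lemma exists_columnOf_eq {w : Fin r → Fin L} (hw : ∀ c, #{x | w x = c} = μ c) :
    ∃ S : Tab μ r, columnOf S = w := by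
  have hcard (c : Fin L) : Fintype.card {x // w x = c} = μ c := by
    rw [Fintype.card_subtype, hw]
  exact ⟨(Equiv.sigmaCongrRight fun c => (Fintype.equivFinOfCardEq (hcard c)).symm).trans
    (Equiv.sigmaFiberEquiv w), rfl⟩

lemma exists_columnOf_eq_recolor (T : Tab μ r) {c d : Fin L} (hcd : c ≠ d) {A : Finset (Fin r)}
    (hA : A ⊆ columnEntries T c ∪ columnEntries T d) (hAc : #A = μ c) :
    ∃ S : Tab μ r, columnOf S = recolor (columnOf T) c d A := by
  refine exists_columnOf_eq fun e => ?_
  rcases eq_or_ne e c with rfl | hec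
  · simpa [recolor_eq_left_iff hcd] using hAc
  rcases eq_or_ne e d with rfl | hed
  · have hfib : ({x | recolor (columnOf T) c e A x = e} : Finset (Fin r)) =
        (columnEntries T c ∪ columnEntries T e) \ A := by
      ext x
      simp [recolor_eq_right_iff hcd, mem_columnEntries]
    rw [hfib, card_sdiff_of_subset hA, card_union_of_disjoint (disjoint_columnEntries T hcd),
      card_columnEntries, card_columnEntries, hAc, Nat.add_sub_cancel_left]
  · rw [← card_columnEntries T e]
    congr 1
    grind [recolor, mem_columnEntries]

end Columns

section SignedTabloid

variable (K : Type) [Field K] {L : ℕ} {μ : Fin L → ℕ} {r : ℕ}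

lemma tabloid_swap_trans (T : Tab μ r) {x y : Cell μ} (hxy : x ≠ y) (hcol : x.1 = y.1) :
    tabloid K μ r ((swap x y).trans T) = -tabloid K μ r T := by
  obtain ⟨c, i⟩ := x
  obtain ⟨_, j⟩ := y
  obtain rfl : c = _ := hcol
  rw [eq_neg_iff_add_eq_zero, add_comm]
  exact (Submodule.Quotient.mk_eq_zero _).2
    (Submodule.subset_span ⟨T, c, i, j, fun h => hxy (h ▸ rfl), rfl⟩)

lemma tabloid_trans {p : Perm (Cell μ)} (hp : ∀ x, (p x).1 = x.1) (T : Tab μ r) :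
    tabloid K μ r (p.trans T) = Perm.sign p • tabloid K μ r T := by
  induction hn : #p.support using Nat.strong_induction_on generalizing p T with
  | _ n ih =>
  rcases eq_or_ne p 1 with rfl | hp1
  · rw [Perm.sign_one, one_smul]
    rfl
  obtain ⟨x, hx⟩ : ∃ x, p x ≠ x := by
    contrapose! hp1
    exact Perm.ext hp1
  set s : Perm (Cell μ) := swap x (p x)
  have hs (y : Cell μ) : (s y).1 = y.1 := by
    grind
  have hdecomp : p.trans T = (s * p).trans (s.trans T) := by
    ext y
    simp [s]
  have hsupport : #(s * p).support < n := hn ▸ Perm.card_support_swap_mul hx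
  rw [hdecomp, ih _ hsupport (p := s * p) (fun y => (hs _).trans (hp y)) _ rfl,
    tabloid_swap_trans K T hx.symm (hp x).symm, Perm.sign_mul, Perm.sign_swap hx.symm, neg_one_mul,
    Units.neg_smul, smul_neg, neg_neg]

/-- The tabloid of any tableau `S` with `columnOf S = w`, multiplied by the sign of the permutation
carrying `T` to `S` so as not to depend on the choice of `S`. If no such `S` exists, it is `0`. -/
def signedTabloid (T : Tab μ r) (w : Fin r → Fin L) : MLam K μ r :=
  Function.extend columnOf (fun S : Tab μ r => Perm.sign (T.symm.trans S) • tabloid K μ r S) 0 w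

lemma signedTabloid_columnOf (T S : Tab μ r) :
    signedTabloid K T (columnOf S) = Perm.sign (T.symm.trans S) • tabloid K μ r S := by
  refine Function.FactorsThrough.extend_apply (fun S S' hSS' => ?_) _ S
  set p : Perm (Cell μ) := S'.trans S.symm with hp
  have hpS : S' = p.trans S := by
    ext x
    simp [hp]
  have hcol (x : Cell μ) : (p x).1 = x.1 := by
    simpa [columnOf, hp] using congrFun hSS' (S' x)
  have hsign : T.symm.trans (p.trans S) = (S.symm.trans p).trans S * T.symm.trans S := by
    ext x
    simp
  simp only [hpS, hsign, tabloid_trans K hcol, Perm.sign_mul, Perm.sign_symm_trans_trans,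
    smul_smul]
  rw [mul_right_comm, Int.units_mul_self, one_mul]

lemma signedTabloid_eq_sign_smul (T S : Tab μ r) :
    signedTabloid K S = Perm.sign (T.symm.trans S) • signedTabloid K T := by
  have hsign (S' : Tab μ r) : Perm.sign (S.symm.trans S') =
      Perm.sign (T.symm.trans S) * Perm.sign (T.symm.trans S') := by
    have hcomp : T.symm.trans S' = S.symm.trans S' * T.symm.trans S := by
      ext
      simp
    rw [hcomp, Perm.sign_mul, mul_left_comm, Int.units_mul_self, mul_one]
  ext w
  refine Eq.trans ?_ (congrFun (Function.extend_smul (Perm.sign (T.symm.trans S)) columnOf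
    (fun S' : Tab μ r => Perm.sign (T.symm.trans S') • tabloid K μ r S') 0) w)
  simp only [signedTabloid, hsign, mul_smul, smul_zero]
  rfl

end SignedTabloid

section Redistribute

variable (K : Type) [Field K] {L : ℕ} {μ : Fin L → ℕ} {r : ℕ}

/-- The signed tabloid obtained from `T` by redistributing the entries of columns `c` and `d` so
that column `c` receives the set `A`. -/
def redistribute (T : Tab μ r) (c d : Fin L) (A : Finset (Fin r)) : MLam K μ r :=
  signedTabloid K T (recolor (columnOf T) c d A)

lemma redistribute_columnEntries (T : Tab μ r) (c d : Fin L) :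
    redistribute K T c d (columnEntries T c) = tabloid K μ r T := by
  rw [redistribute, recolor_eq_self (fun _ => mem_columnEntries), signedTabloid_columnOf,
    Equiv.symm_trans_self, Perm.sign_refl, one_smul]

lemma tabloid_matchSwap_trans (T : Tab μ r) {c d : Fin L} (hcd : c ≠ d) {k : ℕ}
    (x : Fin k ↪ Fin (μ c)) (y : Fin k ↪ Fin (μ d)) :
    tabloid K μ r ((matchSwap (fun i => (⟨c, x i⟩ : Cell μ)) (fun i => ⟨d, y i⟩)).trans T) =
      (-1 : ℤˣ) ^ k • redistribute K T c d (columnEntries T c \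
        (univ.map x).map (columnEmbedding T c) ∪ (univ.map y).map (columnEmbedding T d)) := by
  set q : Perm (Fin r) := matchSwap (columnEmbedding T c ∘ x) (columnEmbedding T d ∘ y) with hq
  have hqT : (matchSwap (fun i => (⟨c, x i⟩ : Cell μ)) (fun i => ⟨d, y i⟩)).trans T = T.trans q :=
    matchSwap_trans T _ _
  have hsign : Perm.sign q = (-1) ^ k := sign_matchSwap fun i h =>
    hcd <| by simpa [columnOf_columnEmbedding] using congrArg (columnOf T) h
  have hword : columnOf (T.trans q) = recolor (columnOf T) c d (columnEntries T c \
      (univ.map x).map (columnEmbedding T c) ∪ (univ.map y).map (columnEmbedding T d)) := by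
    have := recolor_comp_matchSwap_inv (w := columnOf T) (c := c) (d := d)
      (A := columnEntries T c) (x := columnEmbedding T c ∘ x) (y := columnEmbedding T d ∘ y)
      ((columnEmbedding T c).injective.comp x.injective)
      ((columnEmbedding T d).injective.comp y.injective)
      (by simp [mem_columnEntries, columnOf_columnEmbedding])
      (by simp [mem_columnEntries, columnOf_columnEmbedding, hcd.symm])
      (by simp [columnOf_columnEmbedding]) (by simp [columnOf_columnEmbedding])
    rw [recolor_eq_self (fun _ => mem_columnEntries)] at this
    simpa [columnOf_trans, hq, map_eq_image, image_image] using this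
  have hTq : T.symm.trans (T.trans q) = q := by
    ext
    simp
  rw [redistribute, ← hword, signedTabloid_columnOf, hTq, hsign, smul_smul, ← mul_pow, neg_one_mul,
    neg_neg, one_pow, one_smul, hqT]

lemma tabloid_sub_sum_eq_garnirSum (T : Tab μ r) {c d : Fin L} (hcd : c ≠ d) {k : ℕ}
    (y : Fin k ↪ Fin (μ d)) :
    tabloid K μ r T - ∑ I ∈ (powersetCard k (univ : Finset (Fin (μ c)))).attach,
        tabloid K μ r ((matchSwap
          (fun i => (⟨c, I.1.orderEmbOfFin (mem_powersetCard.1 I.2).2 i⟩ : Cell μ))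
          (fun i => ⟨d, y i⟩)).trans T) =
      garnirSum (redistribute K T c d) (columnEntries T c)
        ((univ.map y).map (columnEmbedding T d)) := by
  set J := (univ.map y).map (columnEmbedding T d) with hJ
  have hexch (I : {I // I ∈ powersetCard k (univ : Finset (Fin (μ c)))}) :=
    tabloid_matchSwap_trans K T hcd (I.1.orderEmbOfFin (mem_powersetCard.1 I.2).2).toEmbedding y
  have hJk : #J = k := by simp [hJ]
  rw [garnirSum, hJk, redistribute_columnEntries]
  nth_rw 1 [← map_columnEmbedding_univ]
  rw [powersetCard_map, sum_map, smul_sum, ← sum_attach (powersetCard k univ)]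
  refine congrArg _ (sum_congr rfl fun I _ => ?_)
  have := hexch I
  rwa [map_orderEmbOfFin_univ] at this

lemma garnirElt_eq_garnirSum (T : Tab μ r) {c : ℕ} (hc : c + 1 < L) {k : ℕ}
    (hk : k ≤ μ ⟨c + 1, hc⟩) :
    garnirElt K μ r T c hc k hk = garnirSum (redistribute K T ⟨c, by omega⟩ ⟨c + 1, hc⟩)
      (columnEntries T ⟨c, by omega⟩)
      ((univ.map (Fin.castLEEmb hk)).map (columnEmbedding T ⟨c + 1, hc⟩)) :=
  tabloid_sub_sum_eq_garnirSum K T (by simp) (Fin.castLEEmb hk)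

lemma sgrElt_eq_sum_garnirSum (T : Tab μ r) {c : ℕ} (hc : c + 1 < L) (k : ℕ) :
    sgrElt K μ r T c hc k = ∑ J ∈ (columnEntries T ⟨c + 1, hc⟩).powersetCard k,
      garnirSum (redistribute K T ⟨c, by omega⟩ ⟨c + 1, hc⟩) (columnEntries T ⟨c, by omega⟩) J := by
  have hchoose : ((μ ⟨c + 1, hc⟩).choose k : K) • tabloid K μ r T =
      ∑ _J ∈ (powersetCard k (univ : Finset (Fin (μ ⟨c + 1, hc⟩)))).attach, tabloid K μ r T := by
    rw [sum_const, card_attach, card_powersetCard, card_univ, Fintype.card_fin,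
      Nat.cast_smul_eq_nsmul]
  rw [sgrElt, sum_comm, hchoose, ← sum_sub_distrib, ← map_columnEmbedding_univ T ⟨c + 1, hc⟩,
    powersetCard_map, sum_map, ← sum_attach (powersetCard k univ)]
  refine sum_congr rfl fun B _ => ?_
  have := tabloid_sub_sum_eq_garnirSum K T (c := ⟨c, by omega⟩) (d := ⟨c + 1, hc⟩) (by simp)
    (B.1.orderEmbOfFin (mem_powersetCard.1 B.2).2).toEmbedding
  rwa [map_orderEmbOfFin_univ] at this

lemma redistribute_eq_sign_smul (T S : Tab μ r) {c d : Fin L} {A : Finset (Fin r)}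
    (hA : A ⊆ columnEntries T c ∪ columnEntries T d)
    (hS : columnOf S = recolor (columnOf T) c d A) :
    redistribute K S c d = Perm.sign (T.symm.trans S) • redistribute K T c d := by
  ext B
  have hA' (x) (hx : x ∈ A) : columnOf T x = c ∨ columnOf T x = d := by
    simpa [mem_columnEntries] using hA hx
  rw [redistribute, hS, recolor_recolor hA', signedTabloid_eq_sign_smul K T S]
  rfl

end Redistribute

section Submodules

variable (K : Type) [Field K] {L : ℕ} {μ : Fin L → ℕ} {r : ℕ}

lemma exists_columnOf_eq_map_castLEEmb (T : Tab μ r) (d : Fin L) {k : ℕ} (hk : k ≤ μ d)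
    {J : Finset (Fin r)} (hJ : J ∈ (columnEntries T d).powersetCard k) :
    ∃ S : Tab μ r, columnOf S = columnOf T ∧
      (univ.map (Fin.castLEEmb hk)).map (columnEmbedding S d) = J := by
  rw [← map_columnEmbedding_univ, powersetCard_map, mem_map] at hJ
  obtain ⟨B, hB, rfl⟩ := hJ
  have hBk := (mem_powersetCard.1 hB).2
  have := Perm.isMultiplyPretransitive (Fin (μ d)) k
  obtain ⟨σ, hσ⟩ := MulAction.exists_smul_eq (Perm (Fin (μ d))) (Fin.castLEEmb hk)
    (B.orderEmbOfFin hBk).toEmbedding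
  let q : Perm (Fin r) := σ.viaEmbedding (columnEmbedding T d)
  have hq (x : Fin r) : columnOf T (q x) = columnOf T x := by
    by_cases hx : x ∈ Set.range (columnEmbedding T d)
    · obtain ⟨j, rfl⟩ := hx
      simp only [q, Perm.viaEmbedding_apply, columnOf_columnEmbedding]
    · rw [Perm.viaEmbedding_apply_of_notMem _ _ _ hx]
  refine ⟨T.trans q, ?_, ?_⟩
  · ext x : 1
    simpa [columnOf_trans] using (hq (q⁻¹ x)).symm
  · have hcol : columnEmbedding (T.trans q) d = σ.toEmbedding.trans (columnEmbedding T d) := by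
      ext j : 1
      exact σ.viaEmbedding_apply (columnEmbedding T d) j
    have hB' : univ.map ((Fin.castLEEmb hk).trans σ.toEmbedding) = B := by
      rw [← map_orderEmbOfFin_univ B hBk, ← hσ]
      rfl
    rw [hcol, ← map_map, map_map (Fin.castLEEmb hk), hB']
    rfl

theorem sgrSub_le_garnirSub (kk : ℕ → ℕ) : sgrSub K μ r kk ≤ garnirSub K μ r := by
  refine Submodule.span_le.2 ?_
  rintro _ ⟨T, c, hc, rfl⟩
  rw [SetLike.mem_coe, sgrElt_eq_sum_garnirSum]
  refine Submodule.sum_mem _ fun J hJ => ?_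
  obtain ⟨hJD, hJk⟩ := mem_powersetCard.1 hJ
  have hk : kk c ≤ μ ⟨c + 1, hc⟩ := by
    rw [← hJk, ← card_columnEntries T]
    exact card_le_card hJD
  obtain ⟨S, hS, hSJ⟩ := exists_columnOf_eq_map_castLEEmb T ⟨c + 1, hc⟩ hk hJ
  have hgarnir : garnirElt K μ r S c hc (kk c) hk ∈ garnirSub K μ r :=
    Submodule.subset_span ⟨S, c, hc, kk c, hk, rfl⟩
  have hcol (e : Fin L) : columnEntries S e = columnEntries T e := by
    rw [columnEntries, hS, columnEntries]
  have hredistribute := redistribute_eq_sign_smul K T S (c := ⟨c, by omega⟩) subset_union_left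
    (hS.trans (recolor_eq_self (fun _ => mem_columnEntries) ⟨c + 1, hc⟩).symm)
  rwa [garnirElt_eq_garnirSum, hSJ, hcol, hredistribute, garnirSum_units_smul,
    Submodule.smul_mem_iff'] at hgarnir

lemma sum_garnirSum_singleton_mem_sgrSub (T : Tab μ r) {c : ℕ} (hc : c + 1 < L)
    {A : Finset (Fin r)} (hA : A ∈ (columnEntries T ⟨c, by omega⟩ ∪
      columnEntries T ⟨c + 1, hc⟩).powersetCard (μ ⟨c, by omega⟩)) :
    ∑ j ∈ (columnEntries T ⟨c, by omega⟩ ∪ columnEntries T ⟨c + 1, hc⟩) \ A,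
      garnirSum (redistribute K T ⟨c, by omega⟩ ⟨c + 1, hc⟩) A {j} ∈ sgrSub K μ r fun _ => 1 := by
  obtain ⟨hAU, hAc⟩ := mem_powersetCard.1 hA
  have hcd : (⟨c, by omega⟩ : Fin L) ≠ ⟨c + 1, hc⟩ := by simp
  obtain ⟨S, hS⟩ := exists_columnOf_eq_recolor T hcd hAU hAc
  have hSc : columnEntries S ⟨c, by omega⟩ = A := by
    ext x
    rw [mem_columnEntries, hS, recolor_eq_left_iff hcd]
  have hSd : columnEntries S ⟨c + 1, hc⟩ =
      (columnEntries T ⟨c, by omega⟩ ∪ columnEntries T ⟨c + 1, hc⟩) \ A := by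
    ext x
    rw [mem_columnEntries, hS, recolor_eq_right_iff hcd]
    simp [mem_columnEntries]
  have hmem : sgrElt K μ r S c hc 1 ∈ sgrSub K μ r fun _ => 1 :=
    Submodule.subset_span ⟨S, c, hc, rfl⟩
  rw [sgrElt_eq_sum_garnirSum, hSc, hSd, powersetCard_one, sum_map,
    redistribute_eq_sign_smul K T S hAU hS] at hmem
  simp only [garnirSum_units_smul, ← smul_sum, Submodule.smul_mem_iff'] at hmem
  exact hmem

theorem garnirSub_le_sgrSub_one [CharZero K] (hμ : Antitone μ) :
    garnirSub K μ r ≤ sgrSub K μ r fun _ => 1 := by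
  refine Submodule.span_le.2 ?_
  rintro _ ⟨T, c, hc, k, hk, rfl⟩
  have hcd : (⟨c, by omega⟩ : Fin L) ≠ ⟨c + 1, hc⟩ := by simp
  have hdisj := disjoint_columnEntries T hcd
  have hJ : (univ.map (Fin.castLEEmb hk)).map (columnEmbedding T ⟨c + 1, hc⟩) ⊆
      columnEntries T ⟨c + 1, hc⟩ := by
    rw [← map_columnEmbedding_univ]
    exact map_subset_map.2 (subset_univ _)
  have hU : #(columnEntries T ⟨c, by omega⟩ ∪ columnEntries T ⟨c + 1, hc⟩) ≤
      2 * μ ⟨c, by omega⟩ := by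
    have : μ ⟨c + 1, hc⟩ ≤ μ ⟨c, by omega⟩ := hμ (by simp)
    rw [card_union_of_disjoint hdisj, card_columnEntries, card_columnEntries]
    omega
  rw [SetLike.mem_coe, garnirElt_eq_garnirSum]
  exact garnirSum_mem hU (fun A hA => sum_garnirSum_singleton_mem_sgrSub K T hc hA)
    subset_union_left (hJ.trans subset_union_right) (card_columnEntries T _)
    (disjoint_of_subset_right hJ hdisj)

lemma garnirSub_le_comap {ρ : Perm (Fin r) → (MLam K μ r →ₗ[K] MLam K μ r)}
    (hρ : IsTabAction K μ r ρ) (σ : Perm (Fin r)) :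
    garnirSub K μ r ≤ (garnirSub K μ r).comap (ρ σ) := by
  refine Submodule.span_le.2 ?_
  rintro _ ⟨T, c, hc, k, hk, rfl⟩
  refine Submodule.subset_span ⟨T.trans σ, c, hc, k, hk, ?_⟩
  simp only [garnirElt, map_sub, map_sum, hρ σ _]
  rfl

end Submodules

end Specht

namespace Specht

/-- Theorem 1.2 of the paper (Brauner–Friedmann): for every partition `λ` of `r`,
`M^λ / SGR^λ(1,…,1) ≅ S^λ` as `𝔖_r`-modules; equivalently `SGR^λ(1,…,1) = G^λ` as
subspaces of `M^λ`. Here `SGR^λ(1,…,1)` is spanned by the relations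
`h^T_c = λ'_{c+1}·T̄ − Σ S̄` (single exchanges between columns `c` and `c+1`). -/
theorem statement17 (K : Type) [Field K] [CharZero K] (L r : ℕ) (μ : Fin L → ℕ)
    (hpos : ∀ i, 0 < μ i) (hanti : ∀ i j : Fin L, i ≤ j → μ j ≤ μ i)
    (hr : r = ∑ i, μ i)
    (ρ : Equiv.Perm (Fin r) → (MLam K μ r →ₗ[K] MLam K μ r))
    (hρ : IsTabAction K μ r ρ) :
    IsQuotIso K (sgrSub K μ r (fun _ => 1)) (garnirSub K μ r) ρ ρ ∧
      sgrSub K μ r (fun _ => 1) = garnirSub K μ r := by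
  have hEq : sgrSub K μ r (fun _ => 1) = garnirSub K μ r :=
    le_antisymm (sgrSub_le_garnirSub K fun _ => 1) (garnirSub_le_sgrSub_one K hanti)
  refine ⟨⟨Submodule.quotEquivOfEq _ _ hEq, fun σ x y hxy => ?_⟩, hEq⟩
  rw [Submodule.quotEquivOfEq_mk, Submodule.Quotient.eq] at hxy ⊢
  rw [← map_sub]
  exact garnirSub_le_comap K hρ σ hxy

end Specht
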